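/- arXiv:math/0505298 — 2 statements merged into one kernel-verified Lean document; each statement's English description precedes it below -/
import Mathlib

section
/- The Riemann hypothesis holds if and only if for every ε > 0 there exists a constant C such that for all real x ≥ 2, |π(x) − Li(x)| ≤ C·x^{1/2 + ε}. -/
/-- The prime counting function `π(x)`: the number of primes `p ≤ x`, as a real number. -/
noncomputable def primePi (x : ℝ) : ℝ :=
  (((Finset.range (⌊x⌋₊ + 1)).filter Nat.Prime).card : ℝ)

/-- The logarithmic integral `Li(x) = ∫₂^x dt / log t`. -/
noncomputable def Li (x : ℝ) : ℝ := ∫ t in (2:ℝ)..x, 1 / Real.log t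

namespace RHPi
open Real Set Filter Topology MeasureTheory intervalIntegral

/-- `f` is `O(x^{1/2+ε})` on `[2,∞)` for every `ε > 0`. -/
def PB (f : ℝ → ℝ) : Prop :=
  ∀ ε : ℝ, 0 < ε → ∃ C : ℝ, ∀ x : ℝ, 2 ≤ x → |f x| ≤ C * x ^ ((1 : ℝ) / 2 + ε)

lemma PB.add {f g : ℝ → ℝ} (hf : PB f) (hg : PB g) : PB (fun x => f x + g x) := by
  intro ε hε
  obtain ⟨C, hC⟩ := hf ε hε
  obtain ⟨D, hD⟩ := hg ε hε
  refine ⟨C + D, fun x hx => ?_⟩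
  have h1 := hC x hx
  have h2 := hD x hx
  have h3 := abs_add_le (f x) (g x)
  linarith [add_mul C D (x ^ ((1 : ℝ) / 2 + ε))]

lemma PB.of_le {f g : ℝ → ℝ} (K : ℝ) (hf : PB f) (h : ∀ x, 2 ≤ x → |g x| ≤ K * |f x|) :
    PB g := by
  intro ε hε
  obtain ⟨C, hC⟩ := hf ε hε
  refine ⟨|K| * C, fun x hx => (h x hx).trans ?_⟩
  calc K * |f x| ≤ |K| * |f x| := by gcongr; exact le_abs_self K
    _ ≤ |K| * (C * x ^ ((1 : ℝ) / 2 + ε)) := by gcongr; exact hC x hx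
    _ = _ := by ring

lemma PB.congr {f g : ℝ → ℝ} (hf : PB f) (h : ∀ x, 2 ≤ x → g x = f x) : PB g :=
  hf.of_le 1 fun x hx => by rw [h x hx, one_mul]

lemma PB.neg {f : ℝ → ℝ} (hf : PB f) : PB (fun x => - f x) :=
  hf.of_le 1 fun x _ => by simp

lemma PB_of_sqrt {f : ℝ → ℝ} (K : ℝ) (h : ∀ x, 2 ≤ x → |f x| ≤ K * √x) : PB f := by
  intro ε hε
  refine ⟨|K|, fun x hx => (h x hx).trans ?_⟩
  have : √x ≤ x ^ ((1 : ℝ) / 2 + ε) := by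
    rw [Real.sqrt_eq_rpow]
    exact rpow_le_rpow_of_exponent_le (by linarith) (by linarith)
  calc K * √x ≤ |K| * √x := by gcongr; exact le_abs_self K
    _ ≤ _ := by gcongr

lemma PB_const (c : ℝ) : PB (fun _ => c) :=
  PB_of_sqrt |c| fun x hx => by
    have : 1 ≤ √x := by rw [Real.one_le_sqrt]; linarith
    nlinarith [abs_nonneg c]

lemma PB.mul_log {f : ℝ → ℝ} (hf : PB f) : PB (fun x => f x * log x) := by
  intro ε hε
  obtain ⟨C, hC⟩ := hf (ε / 2) (by positivity)
  refine ⟨|C| / (ε / 2), fun x hx => ?_⟩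
  have hx0 : 0 < x := by linarith
  have hl : 0 ≤ log x := log_nonneg (by linarith)
  have h1 := Real.log_le_rpow_div hx0.le (show 0 < ε / 2 by positivity)
  rw [abs_mul, abs_of_nonneg hl]
  calc |f x| * log x ≤ (|C| * x ^ ((1 : ℝ) / 2 + ε / 2)) * (x ^ (ε / 2) / (ε / 2)) := by
        gcongr
        exact (hC x hx).trans (by gcongr; exact le_abs_self C)
    _ = |C| / (ε / 2) * (x ^ ((1 : ℝ) / 2 + ε / 2) * x ^ (ε / 2)) := by ring
    _ = _ := by rw [← rpow_add hx0]; congr 2; ring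

lemma PB.integral {f g : ℝ → ℝ} (K : ℝ) (hf : PB f)
    (h : ∀ t, 2 ≤ t → |g t| ≤ K * (|f t| / t)) : PB (fun x => ∫ t in (2:ℝ)..x, g t) := by
  intro ε hε
  obtain ⟨C, hC⟩ := hf ε hε
  refine ⟨|K| * |C| / (1 / 2 + ε), fun x hx => ?_⟩
  have hx0 : 0 < x := by linarith
  have key : ∀ t ∈ Set.Ioc 2 x, ‖g t‖ ≤ |K| * |C| * t ^ ((1 : ℝ) / 2 + ε - 1) := by
    intro t ht
    have ht0 : 0 < t := by linarith [ht.1]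
    rw [Real.norm_eq_abs, rpow_sub_one ht0.ne']
    calc |g t| ≤ K * (|f t| / t) := h t ht.1.le
      _ ≤ |K| * (|f t| / t) := by gcongr; exact le_abs_self K
      _ ≤ |K| * (|C| * t ^ ((1 : ℝ) / 2 + ε) / t) := by
        gcongr
        exact (hC t ht.1.le).trans (by gcongr; exact le_abs_self C)
      _ = _ := by ring
  have hi : IntervalIntegrable (fun t : ℝ => |K| * |C| * t ^ ((1 : ℝ) / 2 + ε - 1)) volume 2 x :=
    (intervalIntegrable_rpow' (by linarith)).const_mul _
  have := intervalIntegral.norm_integral_le_of_norm_le hx (ae_of_all _ key) hi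
  rw [Real.norm_eq_abs] at this
  refine this.trans ?_
  rw [intervalIntegral.integral_const_mul, integral_rpow (Or.inl (by linarith))]
  rw [sub_add_cancel, mul_div_assoc', div_mul_eq_mul_div]
  gcongr
  have : 0 < (2:ℝ) ^ ((1 : ℝ) / 2 + ε) := by positivity
  linarith

lemma primePi_eq (x : ℝ) : primePi x = Nat.primeCounting ⌊x⌋₊ := by
  rw [primePi, Nat.primeCounting, Nat.primeCounting', Nat.count_eq_card_filter_range]

lemma log_ne {t : ℝ} (ht : 2 ≤ t) : 0 < log t := log_pos (by linarith)

lemma log_two_le {t : ℝ} (ht : 2 ≤ t) : log 2 ≤ log t := log_le_log (by norm_num) ht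

lemma cont_inv_log (x : ℝ) (hx : 2 ≤ x) :
    ContinuousOn (fun t : ℝ => 1 / log t) (uIcc 2 x) := by
  rw [uIcc_of_le hx]
  intro t ht
  have h1 : log t ≠ 0 := (log_ne ht.1).ne'
  have h2 : t ≠ 0 := by linarith [ht.1]
  exact ContinuousAt.continuousWithinAt (by fun_prop (disch := assumption))

lemma Li_eq {x : ℝ} (hx : 2 ≤ x) :
    Li x = x / log x - 2 / log 2 + ∫ t in (2:ℝ)..x, 1 / log t ^ 2 := by
  have hd : ∀ t ∈ uIcc 2 x, HasDerivAt (fun t : ℝ => t / log t)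
      (1 / log t - 1 / log t ^ 2) t := by
    intro t ht
    rw [uIcc_of_le hx] at ht
    have h1 : log t ≠ 0 := (log_ne ht.1).ne'
    have h2 : t ≠ 0 := by linarith [ht.1]
    refine ((hasDerivAt_id t).div (Real.hasDerivAt_log h2) h1).congr_deriv ?_
    simp only [id]
    field_simp
  have hi1 : IntervalIntegrable (fun t : ℝ => 1 / log t) volume 2 x :=
    (cont_inv_log x hx).intervalIntegrable
  have hi2 := Chebyshev.intervalIntegrable_one_div_log_sq (a := 2) (b := x) (by norm_num)
    (by linarith)
  have := integral_eq_sub_of_hasDerivAt hd (hi1.sub hi2)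
  rw [intervalIntegral.integral_sub hi1 hi2] at this
  rw [Li]
  linarith

lemma hasDerivAt_Li {x : ℝ} (hx : 2 < x) : HasDerivAt Li (1 / log x) x := by
  have hi1 : IntervalIntegrable (fun t : ℝ => 1 / log t) volume 2 x :=
    (cont_inv_log x hx.le).intervalIntegrable
  have h1 : log x ≠ 0 := (log_ne hx.le).ne'
  have h2 : x ≠ 0 := by linarith
  refine intervalIntegral.integral_hasDerivAt_right hi1 ?_ (by fun_prop (disch := assumption))
  refine Measurable.stronglyMeasurable (by fun_prop) |>.stronglyMeasurableAtFilter

lemma cont_Li {x : ℝ} (hx : 2 ≤ x) : ContinuousOn Li (Icc 2 x) := by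
  have := intervalIntegral.continuousOn_primitive_interval
    ((cont_inv_log x hx).integrableOn_compact isCompact_uIcc (μ := volume))
  rw [uIcc_of_le hx] at this
  exact this

lemma Li_parts {x : ℝ} (hx : 2 ≤ x) :
    Li x * log x - ∫ t in (2:ℝ)..x, Li t / t = x - 2 := by
  have hc : ContinuousOn (fun t => Li t * log t) (Icc 2 x) :=
    (cont_Li hx).mul (fun t ht => (Real.continuousAt_log (by linarith [ht.1])).continuousWithinAt)
  have hi : IntervalIntegrable (fun t => Li t / t) volume 2 x := by
    apply ContinuousOn.intervalIntegrable
    rw [uIcc_of_le hx]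
    exact (cont_Li hx).div continuousOn_id (fun t ht => by linarith [ht.1])
  have := integral_eq_sub_of_hasDerivAt_of_le hx hc (f' := fun t => 1 + Li t / t) ?_
    ((intervalIntegrable_const).add hi)
  · rw [intervalIntegral.integral_add intervalIntegrable_const hi] at this
    simp [Li] at this ⊢
    linarith
  · intro t ht
    have h1 : log t ≠ 0 := (log_ne ht.1.le).ne'
    have h2 : t ≠ 0 := by linarith [ht.1]
    refine ((hasDerivAt_Li ht.1).mul (Real.hasDerivAt_log h2)).congr_deriv ?_
    rw [one_div_mul_cancel h1, div_eq_mul_inv]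

lemma pi_of_theta (h : PB (fun x => Chebyshev.theta x - x)) : PB (fun x => primePi x - Li x) := by
  have hl2 : 0 < log 2 := log_pos (by norm_num)
  have h1 : PB (fun x => (Chebyshev.theta x - x) / log x) := by
    refine h.of_le (1 / log 2) fun x hx => ?_
    rw [abs_div, abs_of_pos (log_ne hx), div_mul_eq_mul_div, one_mul]
    gcongr

  have h2 : PB (fun x => ∫ t in (2:ℝ)..x, (Chebyshev.theta t - t) / (t * log t ^ 2)) := by
    refine h.integral (1 / log 2 ^ 2) fun t ht => ?_
    have h0 : 0 < t := by linarith
    have hl := log_ne ht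
    have hp : 0 < t * log t ^ 2 := by positivity
    rw [abs_div, abs_of_pos hp, div_mul_div_comm, one_mul, mul_comm t]
    gcongr

  refine ((h1.add h2).add (PB_const (2 / log 2))).congr fun x hx => ?_
  have hi : IntervalIntegrable (fun t => Chebyshev.theta t / (t * log t ^ 2)) volume 2 x := by
    rw [intervalIntegrable_iff_integrableOn_Icc_of_le hx]
    exact Chebyshev.integrableOn_theta_div_id_mul_log_sq x
  have hi2 := Chebyshev.intervalIntegrable_one_div_log_sq (a := 2) (b := x) (by norm_num)
    (by linarith)
  have : ∫ t in (2:ℝ)..x, (Chebyshev.theta t - t) / (t * log t ^ 2) =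
      (∫ t in (2:ℝ)..x, Chebyshev.theta t / (t * log t ^ 2)) - ∫ t in (2:ℝ)..x, 1 / log t ^ 2 := by
    rw [← intervalIntegral.integral_sub hi hi2]
    apply intervalIntegral.integral_congr
    intro t ht
    rw [uIcc_of_le hx] at ht
    have h1 : log t ≠ 0 := (log_ne ht.1).ne'
    have h2 : t ≠ 0 := by linarith [ht.1]
    simp only
    field_simp
  rw [primePi_eq, Chebyshev.primeCounting_eq_theta_div_log_add_integral hx, Li_eq hx, this]
  ring

lemma theta_of_pi (h : PB (fun x => primePi x - Li x)) : PB (fun x => Chebyshev.theta x - x) := by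
  have h2 : PB (fun x => ∫ t in (2:ℝ)..x, (primePi t - Li t) / t) :=
    h.integral 1 fun t ht => by rw [abs_div, abs_of_pos (show 0 < t by linarith), one_mul]
  refine ((h.mul_log.add h2.neg).add (PB_const (-2))).congr fun x hx => ?_
  have hmono : Monotone primePi := fun a b hab => by
    rw [primePi_eq, primePi_eq]
    exact_mod_cast Nat.monotone_primeCounting (Nat.floor_mono hab)
  have hinv : ContinuousOn (fun t : ℝ => t⁻¹) (uIcc 2 x) := by
    rw [uIcc_of_le hx]
    exact continuousOn_inv₀.mono fun t ht => by
      simp only [mem_compl_iff, mem_singleton_iff]; linarith [ht.1]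
  have hi1 : IntervalIntegrable (fun t => primePi t / t) volume 2 x := by
    simp_rw [div_eq_mul_inv]
    exact (hmono.intervalIntegrable).mul_continuousOn hinv
  have hi2 : IntervalIntegrable (fun t => Li t / t) volume 2 x := by
    simp_rw [div_eq_mul_inv]
    apply ContinuousOn.intervalIntegrable
    refine ContinuousOn.mul ?_ hinv
    rw [uIcc_of_le hx]
    exact cont_Li hx
  have e : ∫ t in (2:ℝ)..x, (primePi t - Li t) / t =
      (∫ t in (2:ℝ)..x, primePi t / t) - ∫ t in (2:ℝ)..x, Li t / t := by
    rw [← intervalIntegral.integral_sub hi1 hi2]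
    simp_rw [sub_div]
  have e2 := Chebyshev.theta_eq_primeCounting_mul_log_sub_integral hx
  simp_rw [← primePi_eq] at e2
  have e3 := Li_parts hx
  rw [e, e2]
  linarith [sub_mul (primePi x) (Li x) (log x)]

lemma PB_psi_theta : PB (fun x => Chebyshev.psi x - Chebyshev.theta x) := by
  obtain ⟨C, hC⟩ := Chebyshev.psi_sub_theta_le_mul_sqrt
  refine PB_of_sqrt C fun x _ => ?_
  rw [abs_of_nonneg (by linarith [Chebyshev.theta_le_psi x])]
  exact hC x

lemma pi_iff_psi : PB (fun x => primePi x - Li x) ↔ PB (fun x => Chebyshev.psi x - x) := by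
  constructor
  · intro h
    exact ((theta_of_pi h).add PB_psi_theta).congr fun x _ => by ring
  · intro h
    exact pi_of_theta ((h.add PB_psi_theta.neg).congr fun x _ => by ring)

end RHPi

namespace RHPi
open Complex Set Filter Topology MeasureTheory

/-- `(s-1)ζ(s)`, as an entire function. -/
noncomputable def Zf : ℂ → ℂ := Function.update (fun s => (s - 1) * riemannZeta s) 1 1

lemma Zf_one : Zf 1 = 1 := by simp [Zf]

lemma Zf_of_ne {s : ℂ} (hs : s ≠ 1) : Zf s = (s - 1) * riemannZeta s := by
  simp [Zf, Function.update_of_ne hs]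

lemma Zf_eventuallyEq {s : ℂ} (hs : s ≠ 1) : Zf =ᶠ[𝓝 s] (fun s => (s - 1) * riemannZeta s) := by
  filter_upwards [isOpen_ne.mem_nhds hs] with z hz using Zf_of_ne hz

lemma Zf_diff : Differentiable ℂ Zf := by
  have h1 : ∀ s, s ≠ 1 → DifferentiableAt ℂ Zf s := fun s hs => by
    refine DifferentiableAt.congr_of_eventuallyEq ?_ (Zf_eventuallyEq hs)
    exact (differentiableAt_id.sub_const 1).mul (differentiableAt_riemannZeta hs)
  intro s
  by_cases hs : s = 1
  · subst hs
    refine (Complex.analyticAt_of_differentiable_on_punctured_nhds_of_continuousAt ?_ ?_).differentiableAt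
    · filter_upwards [self_mem_nhdsWithin] with z hz using h1 z hz
    · rw [continuousAt_iff_punctured_nhds, Zf_one]
      refine riemannZeta_residue_one.congr' ?_
      filter_upwards [self_mem_nhdsWithin] with z hz using (Zf_of_ne hz).symm
  · exact h1 s hs

/-- Mellin-type transform over `(1,∞)`. -/
noncomputable def Mz (f : ℝ → ℂ) (s : ℂ) : ℂ := mellin ((Ioi 1).indicator f) (-s)

lemma loc_ind {f : ℝ → ℂ} (hf : Measurable f) {C a : ℝ} (hb : ∀ t, 1 < t → ‖f t‖ ≤ C * t ^ a) :
    LocallyIntegrableOn ((Ioi 1).indicator f) (Ioi 0) := by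
  have h1 : LocallyIntegrableOn (fun t : ℝ => |C| * t ^ a) (Ioi 0) := by
    refine ContinuousOn.locallyIntegrableOn ?_ measurableSet_Ioi
    intro t ht
    have : t ≠ 0 := (mem_Ioi.mp ht).ne'
    exact (continuousAt_const.mul
      (Real.continuousAt_rpow_const _ _ (Or.inl this))).continuousWithinAt
  rw [locallyIntegrableOn_iff (isOpen_Ioi.isLocallyClosed)] at h1 ⊢
  intro K hK hKc
  refine (h1 K hK hKc).mono' (hf.indicator measurableSet_Ioi).aestronglyMeasurable ?_
  refine (ae_restrict_iff' hKc.measurableSet).mpr (ae_of_all _ fun t ht => ?_)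
  have ht0 : 0 < t := hK ht
  by_cases h : 1 < t
  · rw [indicator_of_mem (mem_Ioi.mpr h)]
    exact (hb t h).trans (by gcongr; exact le_abs_self C)
  · rw [indicator_of_notMem (by simpa using h)]
    simp; positivity

lemma ind_top {f : ℝ → ℂ} {C a : ℝ} (hb : ∀ t, 1 < t → ‖f t‖ ≤ C * t ^ a) :
    ((Ioi 1).indicator f) =O[atTop] (fun t : ℝ => t ^ (-(-a))) := by
  refine Asymptotics.IsBigO.of_bound C ?_
  filter_upwards [eventually_gt_atTop 1] with t ht
  rw [indicator_of_mem (mem_Ioi.mpr ht), neg_neg, Real.norm_of_nonneg (by positivity)]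
  exact hb t ht

lemma ind_bot (f : ℝ → ℂ) (b : ℝ) :
    ((Ioi 1).indicator f) =O[𝓝[>] 0] (fun t : ℝ => t ^ (-b)) := by
  refine Asymptotics.IsBigO.of_bound 0 ?_
  have : Iio (1:ℝ) ∈ 𝓝[>] (0:ℝ) := mem_nhdsWithin_of_mem_nhds (Iio_mem_nhds one_pos)
  filter_upwards [this] with t ht
  rw [indicator_of_notMem (by simpa using (mem_Iio.mp ht).le)]
  simp

lemma Mz_conv {f : ℝ → ℂ} (hf : Measurable f) {C a : ℝ} (hb : ∀ t, 1 < t → ‖f t‖ ≤ C * t ^ a)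
    {s : ℂ} (hs : a < s.re) : MellinConvergent ((Ioi 1).indicator f) (-s) :=
  mellinConvergent_of_isBigO_rpow (a := -a) (b := -s.re - 1) (loc_ind hf hb) (ind_top hb)
    (by simpa using hs) (ind_bot f _) (by simp)

lemma Mz_diff {f : ℝ → ℂ} (hf : Measurable f) {C a : ℝ} (hb : ∀ t, 1 < t → ‖f t‖ ≤ C * t ^ a)
    {s : ℂ} (hs : a < s.re) : DifferentiableAt ℂ (Mz f) s := by
  have := mellin_differentiableAt_of_isBigO_rpow (a := -a) (b := -s.re - 1) (s := -s)
    (loc_ind hf hb) (ind_top hb)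
    (by simpa using hs) (ind_bot f _) (by simp)
  exact this.comp s differentiableAt_id.neg

lemma Mz_fun (f : ℝ → ℂ) (s : ℂ) :
    (fun t : ℝ => (t : ℂ) ^ (-s - 1) • (Ioi 1).indicator f t) =
      (Ioi 1).indicator (fun t : ℝ => f t * (t : ℂ) ^ (-(s + 1))) := by
  ext t
  by_cases h : t ∈ Ioi (1:ℝ)
  · rw [indicator_of_mem h, indicator_of_mem h, smul_eq_mul, mul_comm, neg_add, sub_eq_add_neg]
  · rw [indicator_of_notMem h, indicator_of_notMem h, smul_zero]

lemma Mz_eq (f : ℝ → ℂ) (s : ℂ) :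
    Mz f s = ∫ t in Ioi (1:ℝ), f t * (t : ℂ) ^ (-(s + 1)) := by
  rw [Mz, mellin, Mz_fun, setIntegral_indicator measurableSet_Ioi]
  congr 2
  ext t; simp only [mem_inter_iff, mem_Ioi]
  constructor
  · exact fun h => h.2
  · exact fun h => ⟨by linarith, h⟩

lemma Mz_integrable {f : ℝ → ℂ} (hf : Measurable f) {C a : ℝ}
    (hb : ∀ t, 1 < t → ‖f t‖ ≤ C * t ^ a) {s : ℂ} (hs : a < s.re) :
    IntegrableOn (fun t : ℝ => f t * (t : ℂ) ^ (-(s + 1))) (Ioi 1) := by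
  have := Mz_conv hf hb hs
  rw [MellinConvergent, Mz_fun, integrableOn_indicator_iff measurableSet_Ioi] at this
  refine this.mono_set ?_
  intro t ht
  exact ⟨ht, by have := mem_Ioi.mp ht; rw [mem_Ioi]; linarith⟩

lemma Mz_bound {f : ℝ → ℂ} {C a : ℝ} (hb : ∀ t, 1 < t → ‖f t‖ ≤ C * t ^ a)
    {s : ℂ} (hs : a < s.re) : ‖Mz f s‖ ≤ C / (s.re - a) := by
  rw [Mz_eq]
  have h1 : ∀ t ∈ Ioi (1:ℝ), ‖f t * (t : ℂ) ^ (-(s + 1))‖ ≤ C * t ^ (a - s.re - 1) := by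
    intro t ht
    have ht0 : 0 < t := by have := mem_Ioi.mp ht; linarith
    rw [norm_mul, norm_cpow_eq_rpow_re_of_pos ht0]
    calc ‖f t‖ * t ^ (-(s + 1)).re ≤ C * t ^ a * t ^ (-(s + 1)).re := by
          gcongr; exact hb t ht
      _ = _ := by
          rw [mul_assoc, ← Real.rpow_add ht0]; congr 2; simp; ring
  have h2 : IntegrableOn (fun t : ℝ => C * t ^ (a - s.re - 1)) (Ioi 1) :=
    (integrableOn_Ioi_rpow_of_lt (by linarith) one_pos).const_mul C
  refine (norm_integral_le_of_norm_le h2 ((ae_restrict_iff' measurableSet_Ioi).mpr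
    (ae_of_all _ h1))).trans ?_
  rw [integral_const_mul, integral_Ioi_rpow_of_lt (by linarith) one_pos]
  simp
  apply le_of_eq
  rw [← neg_sub s.re a, neg_div_neg_eq]
  ring

lemma Mz_id {s : ℂ} (hs : 1 < s.re) : Mz (fun t => (t : ℂ)) s = 1 / (s - 1) := by
  rw [Mz_eq]
  have h1 : ∫ t in Ioi (1:ℝ), (t : ℂ) * (t : ℂ) ^ (-(s + 1)) =
      ∫ t in Ioi (1:ℝ), (t : ℂ) ^ (-s) := by
    refine setIntegral_congr_fun measurableSet_Ioi fun t ht => ?_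
    have ht0 : (t : ℂ) ≠ 0 := by
      have := mem_Ioi.mp ht; exact_mod_cast (by linarith : t ≠ 0)
    rw [neg_add, cpow_add _ _ ht0, cpow_neg_one]
    field_simp
  rw [h1, integral_Ioi_cpow_of_lt (by simpa using hs) one_pos]
  simp only [ofReal_one, one_cpow]
  rw [neg_div, ← div_neg]; congr 1; ring

lemma Mz_sub {f g : ℝ → ℂ} (hf : Measurable f) (hg : Measurable g) {C a : ℝ}
    (hfb : ∀ t, 1 < t → ‖f t‖ ≤ C * t ^ a) {D : ℝ}
    (hgb : ∀ t, 1 < t → ‖g t‖ ≤ D * t ^ a) {s : ℂ} (hs : a < s.re) :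
    Mz (fun t => f t - g t) s = Mz f s - Mz g s := by
  rw [Mz_eq, Mz_eq, Mz_eq, ← integral_sub (Mz_integrable hf hfb hs) (Mz_integrable hg hgb hs)]
  simp_rw [sub_mul]

/-- identity principle on right half planes -/
lemma ident {f g : ℂ → ℂ} {a b : ℝ} (hf : ∀ s : ℂ, a < s.re → DifferentiableAt ℂ f s)
    (hg : ∀ s : ℂ, a < s.re → DifferentiableAt ℂ g s)
    (h : ∀ s : ℂ, b < s.re → f s = g s) {s : ℂ} (hs : a < s.re) : f s = g s := by
  have ho : IsOpen {s : ℂ | a < s.re} := isOpen_lt continuous_const continuous_re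
  have hF : AnalyticOnNhd ℂ f {s : ℂ | a < s.re} :=
    DifferentiableOn.analyticOnNhd (fun s hs => (hf s hs).differentiableWithinAt) ho
  have hG : AnalyticOnNhd ℂ g {s : ℂ | a < s.re} :=
    DifferentiableOn.analyticOnNhd (fun s hs => (hg s hs).differentiableWithinAt) ho
  have hp : IsPreconnected {s : ℂ | a < s.re} := (convex_halfSpace_re_gt a).isPreconnected
  have hz : ((max a b + 1 : ℝ) : ℂ) ∈ {s : ℂ | a < s.re} := by
    simp only [mem_ofPred_eq, ofReal_re]; linarith [le_max_left a b]
  refine hF.eqOn_of_preconnected_of_eventuallyEq hG hp hz ?_ hs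
  have ho2 : IsOpen {s : ℂ | b < s.re} := isOpen_lt continuous_const continuous_re
  filter_upwards [ho2.mem_nhds (show ((max a b + 1 : ℝ) : ℂ) ∈ {s : ℂ | b < s.re} by
    simp only [mem_ofPred_eq, ofReal_re]; linarith [le_max_right a b])] with z hz
  exact h z hz

/-- fractional part function (negated) -/
noncomputable def fr (t : ℝ) : ℂ := (⌊t⌋₊ : ℂ) - t

lemma meas_floor : Measurable (fun t : ℝ => ((⌊t⌋₊ : ℕ) : ℂ)) :=
  (measurable_from_nat (f := fun n : ℕ => (n : ℂ))).comp Nat.measurable_floor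

lemma fr_meas : Measurable fr := meas_floor.sub measurable_ofReal

lemma fr_bound (t : ℝ) (ht : 1 < t) : ‖fr t‖ ≤ 1 * t ^ (0:ℝ) := by
  have h1 := Nat.floor_le (show 0 ≤ t by linarith)
  have h2 := Nat.lt_floor_add_one t
  have : fr t = (((⌊t⌋₊ : ℝ) - t : ℝ) : ℂ) := by simp [fr]
  rw [this, norm_real, Real.norm_eq_abs, Real.rpow_zero, abs_le]
  constructor <;> linarith

lemma id_bound (t : ℝ) (ht : 1 < t) : ‖(t : ℂ)‖ ≤ 1 * t ^ (1:ℝ) := by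
  rw [norm_real, Real.norm_of_nonneg (by linarith)]; simp

lemma floor_bound (t : ℝ) (ht : 1 < t) : ‖((⌊t⌋₊ : ℕ) : ℂ)‖ ≤ 1 * t ^ (1:ℝ) := by
  rw [norm_natCast]; simpa using Nat.floor_le (show 0 ≤ t by linarith)

lemma zeta_eq {s : ℂ} (hs : 1 < s.re) :
    riemannZeta s = s * Mz (fun t : ℝ => ((⌊t⌋₊ : ℕ) : ℂ)) s := by
  have := LSeries_eq_mul_integral_of_nonneg (fun _ => (1:ℝ)) (r := 1) zero_le_one hs ?_ (by simp)
  · rw [← LSeries_one_eq_riemannZeta hs, Mz_eq]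
    simpa [Pi.one_def] using this
  · simpa using Asymptotics.isBigO_refl _ _

lemma ne_one_of_re {s : ℂ} (hs : 1 < s.re) : s - 1 ≠ 0 := by
  intro h
  rw [sub_eq_zero] at h
  rw [h] at hs; simp at hs

lemma Zf_eq {s : ℂ} (hs : 0 < s.re) : Zf s = s + s * (s - 1) * Mz fr s := by
  refine ident (a := 0) (b := 1) (f := Zf) (g := fun s => s + s * (s - 1) * Mz fr s)
    (fun s _ => Zf_diff s) (fun s hs => ?_) (fun s hs => ?_) hs
  · have := Mz_diff fr_meas fr_bound hs
    fun_prop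
  · have h := ne_one_of_re hs
    rw [Zf_of_ne (sub_ne_zero.mp h), zeta_eq hs]
    have : Mz fr s = Mz (fun t : ℝ => ((⌊t⌋₊ : ℕ) : ℂ)) s - 1 / (s - 1) := by
      rw [← Mz_id hs]
      exact Mz_sub meas_floor measurable_ofReal floor_bound id_bound hs
    simp only [this]
    field_simp
    ring

lemma Zf_bound {s : ℂ} (hs : 1 / 2 ≤ s.re) : ‖Zf s‖ ≤ 3 * (1 + ‖s‖) ^ 2 := by
  rw [Zf_eq (by linarith)]
  have h1 : ‖Mz fr s‖ ≤ 2 := (Mz_bound fr_bound (by linarith)).trans (by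
    rw [div_le_iff₀ (by linarith)]; linarith)
  have h2 : ‖s - 1‖ ≤ ‖s‖ + 1 := (norm_sub_le _ _).trans (by simp)
  calc ‖s + s * (s - 1) * Mz fr s‖ ≤ ‖s‖ + ‖s‖ * ‖s - 1‖ * ‖Mz fr s‖ :=
        (norm_add_le _ _).trans (by rw [norm_mul, norm_mul])
    _ ≤ ‖s‖ + ‖s‖ * (‖s‖ + 1) * 2 := by gcongr
    _ ≤ _ := by nlinarith [norm_nonneg s]

/-- `ψ(t) - t` -/
noncomputable def Dp (t : ℝ) : ℂ := ((Chebyshev.psi t - t : ℝ) : ℂ)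

lemma Dp_meas : Measurable Dp :=
  measurable_ofReal.comp (Chebyshev.psi_mono.measurable.sub measurable_id)

lemma psi_bound (t : ℝ) (ht : 1 < t) :
    ‖((Chebyshev.psi t : ℝ) : ℂ)‖ ≤ (Real.log 4 + 4) * t ^ (1:ℝ) := by
  rw [norm_real, Real.norm_of_nonneg (Chebyshev.psi_nonneg t), Real.rpow_one]
  exact Chebyshev.psi_le_const_mul_self (by linarith)

lemma Dp_bound (t : ℝ) (ht : 1 < t) : ‖Dp t‖ ≤ (Real.log 4 + 5) * t ^ (1:ℝ) := by
  have := psi_bound t ht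
  have h2 := id_bound t ht
  rw [Dp, ofReal_sub]
  refine (norm_sub_le _ _).trans ?_
  linarith

lemma vonMangoldt_eq {s : ℂ} (hs : 1 < s.re) :
    LSeries (fun n => (ArithmeticFunction.vonMangoldt n : ℂ)) s =
      s * Mz (fun t : ℝ => ((Chebyshev.psi t : ℝ) : ℂ)) s := by
  have e : ∀ n : ℕ, ∑ k ∈ Finset.Icc 1 n, ArithmeticFunction.vonMangoldt k =
      Chebyshev.psi n := by
    intro n
    rw [Chebyshev.psi, Nat.floor_natCast]; rfl
  have := LSeries_eq_mul_integral_of_nonneg (fun n => ArithmeticFunction.vonMangoldt n) (r := 1)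
    zero_le_one hs ?_ (fun n => ArithmeticFunction.vonMangoldt_nonneg)
  · rw [this, Mz_eq]
    congr 2
    ext t
    congr 1
    rw [Chebyshev.psi_eq_psi_coe_floor, ← e]
    push_cast; rfl
  · refine Asymptotics.IsBigO.of_bound (Real.log 4 + 4) (Eventually.of_forall fun n => ?_)
    rw [e, Real.rpow_one, Real.norm_of_nonneg (Chebyshev.psi_nonneg _), Real.norm_natCast]
    exact Chebyshev.psi_le_const_mul_self (by positivity)

lemma deriv_Zf {s : ℂ} (hs : s ≠ 1) :
    deriv Zf s = riemannZeta s + (s - 1) * deriv riemannZeta s := by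
  rw [(Zf_eventuallyEq hs).deriv_eq]
  have h := ((hasDerivAt_id s).sub_const 1).mul (differentiableAt_riemannZeta hs).hasDerivAt
  have := h.deriv
  simp only [id, one_mul] at this
  exact this

lemma Zf_ode {s : ℂ} (hs : 1 < s.re) : deriv Zf s = -(s * Mz Dp s + 1) * Zf s := by
  have h := ne_one_of_re hs
  have hz : riemannZeta s ≠ 0 := riemannZeta_ne_zero_of_one_lt_re hs
  have e1 : Mz Dp s = Mz (fun t : ℝ => ((Chebyshev.psi t : ℝ) : ℂ)) s - 1 / (s - 1) := by
    have e0 := Mz_sub (f := fun t : ℝ => ((Chebyshev.psi t : ℝ) : ℂ)) (g := fun t : ℝ => (t : ℂ))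
      (measurable_ofReal.comp Chebyshev.psi_mono.measurable)
      measurable_ofReal psi_bound id_bound hs
    rw [← Mz_id hs, ← e0]
    congr 1; ext t; simp [Dp]
  have e2 := ArithmeticFunction.LSeries_vonMangoldt_eq_deriv_riemannZeta_div hs
  have e3 : s * Mz (fun t : ℝ => ((Chebyshev.psi t : ℝ) : ℂ)) s =
      -deriv riemannZeta s / riemannZeta s := by
    rw [← vonMangoldt_eq hs]; exact e2
  rw [deriv_Zf (sub_ne_zero.mp h), Zf_of_ne (sub_ne_zero.mp h), e1, mul_sub, e3]
  field_simp
  ring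

end RHPi

namespace RHPi
open Complex Set Filter Topology MeasureTheory

lemma Dp_bound_of_PB (h : PB (fun x => Chebyshev.psi x - x)) {ε : ℝ} (hε : 0 < ε) :
    ∃ C, ∀ t, 1 < t → ‖Dp t‖ ≤ C * t ^ (1 / 2 + ε) := by
  obtain ⟨C, hC⟩ := h ε hε
  refine ⟨|C| + 2, fun t ht => ?_⟩
  have hp : 1 ≤ t ^ (1 / 2 + ε) := Real.one_le_rpow ht.le (by linarith)
  rw [Dp, norm_real, Real.norm_eq_abs]
  by_cases h2 : 2 ≤ t
  · refine (hC t h2).trans ?_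
    gcongr
    linarith [le_abs_self C]
  · push Not at h2
    rw [Chebyshev.psi_eq_zero_of_lt_two h2, zero_sub, abs_neg, abs_of_pos (by linarith)]
    nlinarith [abs_nonneg C]

lemma Mz_Dp_diff (h : PB (fun x => Chebyshev.psi x - x)) {s : ℂ} (hs : 1 / 2 < s.re) :
    DifferentiableAt ℂ (Mz Dp) s := by
  obtain ⟨C, hC⟩ := Dp_bound_of_PB h (ε := (s.re - 1 / 2) / 2) (by linarith)
  exact Mz_diff Dp_meas hC (by linarith)

lemma Zf_ne_zero_of_PB (h : PB (fun x => Chebyshev.psi x - x)) {s : ℂ} (hs : 1 / 2 < s.re) :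
    Zf s ≠ 0 := by
  intro h0
  have hode : ∀ z : ℂ, 1 / 2 < z.re → deriv Zf z = -(z * Mz Dp z + 1) * Zf z := by
    intro z hz
    refine ident (a := 1 / 2) (b := 1) (f := deriv Zf)
      (g := fun z => -(z * Mz Dp z + 1) * Zf z) (fun s _ => ?_) (fun s hs => ?_)
      (fun s hs => Zf_ode hs) hz
    · exact (Zf_diff.analyticAt s).deriv.differentiableAt
    · have := Mz_Dp_diff h hs
      have := Zf_diff s
      fun_prop
  have ho : IsOpen {s : ℂ | 1 / 2 < s.re} := isOpen_lt continuous_const continuous_re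
  have hA : AnalyticAt ℂ (fun z => -(z * Mz Dp z + 1)) s := by
    have : DifferentiableOn ℂ (fun z => -(z * Mz Dp z + 1)) {s : ℂ | 1 / 2 < s.re} := by
      intro z hz
      have := Mz_Dp_diff h hz
      exact DifferentiableAt.differentiableWithinAt (by fun_prop)
    exact this.analyticAt (ho.mem_nhds hs)
  have hZ := Zf_diff.analyticAt s
  have e1 : analyticOrderAt (deriv Zf) s =
      analyticOrderAt (fun z => -(z * Mz Dp z + 1)) s + analyticOrderAt Zf s := by
    rw [← analyticOrderAt_mul hA hZ]
    apply analyticOrderAt_congr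
    filter_upwards [ho.mem_nhds hs] with z hz
    exact hode z hz
  have e2 := hZ.analyticOrderAt_deriv_add_one
  rw [h0] at e2
  simp only [sub_zero] at e2
  have hne : analyticOrderAt Zf s ≠ ⊤ := by
    intro htop
    rw [analyticOrderAt_eq_top] at htop
    have := (Zf_diff.differentiableOn (s := univ)).analyticOnNhd isOpen_univ
    have h3 := this.eqOn_zero_of_preconnected_of_eventuallyEq_zero isPreconnected_univ
      (mem_univ s) htop (mem_univ 1)
    rw [Zf_one] at h3
    simp at h3
  obtain ⟨n, hn⟩ := ENat.ne_top_iff_exists.mp hne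
  have hne' : analyticOrderAt (deriv Zf) s ≠ ⊤ := by
    intro h; rw [h] at e2; rw [← e2] at hne; simp at hne
  obtain ⟨m, hm⟩ := ENat.ne_top_iff_exists.mp hne'
  have e3 : analyticOrderAt Zf s ≤ analyticOrderAt (deriv Zf) s := by
    rw [e1]; exact le_add_self
  rw [← hn, ← hm] at e3 e2
  norm_cast at e3 e2
  omega

lemma zeta_reflect {s : ℂ} (h0 : riemannZeta s = 0) (ht : ¬∃ n : ℕ, s = -2 * (n + 1))
    (h1 : s ≠ 1) : riemannZeta (1 - s) = 0 ∧ 0 < s.re := by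
  have hs0 : s ≠ 0 := by
    rintro rfl
    rw [riemannZeta_zero] at h0
    norm_num at h0
  have hG : Gammaℝ s ≠ 0 := by
    rw [Ne, Gammaℝ_eq_zero_iff]
    rintro ⟨n, hn⟩
    rcases n with _ | n
    · simp at hn; exact hs0 hn
    · exact ht ⟨n, by rw [hn]; push_cast; ring⟩
  have hL : completedRiemannZeta s = 0 := by
    rw [riemannZeta_def_of_ne_zero hs0, div_eq_zero_iff] at h0
    exact h0.resolve_right hG
  have h2 : riemannZeta (1 - s) = 0 := by
    rw [riemannZeta_def_of_ne_zero (sub_ne_zero.mpr h1.symm), completedRiemannZeta_one_sub, hL,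
      zero_div]
  refine ⟨h2, ?_⟩
  by_contra hre
  push Not at hre
  exact riemannZeta_ne_zero_of_one_le_re (s := 1 - s) (by simp; linarith) h2

lemma RH_of_PB (h : PB (fun x => Chebyshev.psi x - x)) : RiemannHypothesis := by
  intro s h0 ht h1
  obtain ⟨h2, h3⟩ := zeta_reflect h0 ht h1
  have hs0 : s ≠ 0 := by rintro rfl; simp at h3
  rcases lt_trichotomy s.re (1 / 2) with h4 | h4 | h4
  · exfalso
    refine Zf_ne_zero_of_PB h (s := 1 - s) (by simp; linarith) ?_
    rw [Zf_of_ne (by simpa using hs0), h2, mul_zero]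
  · exact h4
  · exfalso
    exact Zf_ne_zero_of_PB h h4 (by rw [Zf_of_ne h1, h0, mul_zero])

lemma Zf_ne_zero_of_RH (h : RiemannHypothesis) {s : ℂ} (hs : 1 / 2 < s.re) : Zf s ≠ 0 := by
  by_cases h1 : s = 1
  · rw [h1, Zf_one]; exact one_ne_zero
  rw [Zf_of_ne h1]
  refine mul_ne_zero (sub_ne_zero.mpr h1) fun h0 => ?_
  have := h s h0 ?_ h1
  · linarith
  · rintro ⟨n, hn⟩
    rw [hn] at hs
    simp at hs
    have : (0:ℝ) ≤ n := n.cast_nonneg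
    linarith

end RHPi

namespace RHPi
open Complex Set Filter Topology MeasureTheory

lemma L4a : ∃ K : ℝ, 1 ≤ K ∧ ∀ s : ℂ, s.re = 2 → 1 ≤ K * ‖Zf s‖ := by
  let m : ℕ → ℂ := fun n => (ArithmeticFunction.moebius n : ℂ)
  have hsum : ∀ s : ℂ, s.re = 2 → LSeriesSummable m s := fun s hs =>
    ArithmeticFunction.LSeriesSummable_moebius_iff.mpr (by rw [hs]; norm_num)
  refine ⟨max 1 (∑' n, ‖LSeries.term m 2 n‖), le_max_left _ _, fun s hs => ?_⟩
  have h1 : 1 < s.re := by rw [hs]; norm_num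
  have hle : ‖LSeries m s‖ ≤ ∑' n, ‖LSeries.term m 2 n‖ := by
    refine (norm_tsum_le_tsum_norm (hsum s hs).norm).trans (le_of_eq ?_)
    congr 1; ext n
    simp [LSeries.norm_term_eq, hs]
  have h2 := LSeries_one_mul_Lseries_moebius h1
  rw [LSeries_one_eq_riemannZeta h1] at h2
  have h3 : ‖riemannZeta s‖ * ‖LSeries m s‖ = 1 := by rw [← norm_mul, h2, norm_one]
  have h4 : 1 ≤ ‖s - 1‖ := by
    have := Complex.re_le_norm (s - 1); simp [hs] at this; linarith
  rw [Zf_of_ne (sub_ne_zero.mp (ne_one_of_re h1)), norm_mul]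
  calc 1 = ‖LSeries m s‖ * (1 * ‖riemannZeta s‖) := by linarith
    _ ≤ _ := by
      gcongr
      exact hle.trans (le_max_right _ _)

/-- logarithmic derivative of `Zf` -/
noncomputable def Pf (s : ℂ) : ℂ := deriv Zf s / Zf s

lemma Pf_diff (h : RiemannHypothesis) {s : ℂ} (hs : 1 / 2 < s.re) : DifferentiableAt ℂ Pf s :=
  (Zf_diff.analyticAt s).deriv.differentiableAt.div (Zf_diff s) (Zf_ne_zero_of_RH h hs)

lemma ball_re {t : ℝ} {z : ℂ} (hz : z ∈ Metric.ball (⟨2, t⟩ : ℂ) (3 / 2)) : 1 / 2 < z.re := by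
  rw [Metric.mem_ball, dist_eq] at hz
  have := (abs_le.mp (abs_re_le_norm (z - ⟨2, t⟩))).1
  simp at this
  linarith

lemma L4b0 (h : RiemannHypothesis) {K : ℝ} (hK : 1 ≤ K)
    (hKs : ∀ s : ℂ, s.re = 2 → 1 ≤ K * ‖Zf s‖) {δ : ℝ} (hδ : 0 < δ) {s : ℂ}
    (h1 : 1 / 2 + δ ≤ s.re) (h2 : s.re ≤ 2) :
    ‖Pf s‖ ≤ 12 / δ ^ 2 * Real.log (75 * K * (1 + |s.im|) ^ 2) := by
  set t := s.im with ht
  set c : ℂ := ⟨2, t⟩ with hc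
  set M := Real.log (75 * K * (1 + |t|) ^ 2) with hM
  have hA : 1 < 75 * K * (1 + |t|) ^ 2 := by
    have : 1 ≤ (1 + |t|) ^ 2 := one_le_pow₀ (by linarith [abs_nonneg t])
    nlinarith
  have hM0 : 0 < M := Real.log_pos hA
  have hPd : DifferentiableOn ℂ Pf (Metric.ball c (3 / 2)) := fun z hz =>
    (Pf_diff h (ball_re hz)).differentiableWithinAt
  obtain ⟨g, hg0, hg⟩ := hPd.isExactOn_ball.with_val_at c 0
  have hcb : c ∈ Metric.ball c (3 / 2) := Metric.mem_ball_self (by norm_num)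
  have hFd : ∀ z ∈ Metric.ball c (3 / 2),
      HasDerivAt (fun z => Zf z * exp (-g z)) 0 z := by
    intro z hz
    have hz0 := Zf_ne_zero_of_RH h (ball_re hz)
    refine ((Zf_diff z).hasDerivAt.mul (hg z hz).neg.cexp).congr_deriv ?_
    rw [Pf]; field_simp; ring
  have hexp : ∀ z ∈ Metric.ball c (3 / 2), Zf z = Zf c * exp (g z) := by
    intro z hz
    have := Metric.isOpen_ball.is_const_of_deriv_eq_zero (convex_ball c (3 / 2)).isPreconnected
      (fun z hz => (hFd z hz).differentiableAt.differentiableWithinAt)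
      (fun z hz => (hFd z hz).deriv) hz hcb
    simp only [hg0, neg_zero, Complex.exp_zero, mul_one] at this
    rw [← this, mul_assoc, ← Complex.exp_add]; simp
  have hre : ∀ z ∈ Metric.ball c (3 / 2), (g z).re ≤ M := by
    intro z hz
    rw [hM, Real.le_log_iff_exp_le (by linarith), ← Complex.norm_exp]
    have hzr := ball_re hz
    have e1 := congrArg norm (hexp z hz)
    rw [norm_mul] at e1
    have e2 := Zf_bound hzr.le
    have e3 := hKs c rfl
    have e4 : ‖z‖ ≤ 7 / 2 + |t| := by
      have a1 : ‖z‖ ≤ ‖z - c‖ + ‖c‖ := by simpa using norm_add_le (z - c) c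
      have a2 : ‖c‖ ≤ 2 + |t| := by simpa [hc] using norm_le_abs_re_add_abs_im c
      rw [Metric.mem_ball, dist_eq] at hz
      linarith
    have e5 : (1 + ‖z‖) ^ 2 ≤ (5 * (1 + |t|)) ^ 2 := by
      have := abs_nonneg t
      gcongr; linarith
    calc ‖exp (g z)‖ = 1 * ‖exp (g z)‖ := (one_mul _).symm
      _ ≤ K * ‖Zf c‖ * ‖exp (g z)‖ := by gcongr
      _ = K * ‖Zf z‖ := by rw [e1]; ring
      _ ≤ K * (3 * (5 * (1 + |t|)) ^ 2) := by gcongr; linarith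
      _ = _ := by ring
  have hbc : ∀ z, ‖z - c‖ ≤ 3 / 2 - δ / 2 → ‖g z‖ ≤ 6 * M / δ := by
    intro z hz
    have hsh : ∀ w ∈ Metric.ball (0:ℂ) (3 / 2), c + w ∈ Metric.ball c (3 / 2) := by
      intro w hw
      rw [Metric.mem_ball, dist_eq] at *
      simpa using hw
    have := borelCaratheodory_zero (f := fun w => g (c + w)) (R := 3 / 2) (z := z - c) hM0
      (fun w hw => ((hg _ (hsh w hw)).differentiableAt.comp w
        (by fun_prop)).differentiableWithinAt)
      (fun w hw => hre _ (hsh w hw)) (by norm_num)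
      (by rw [Metric.mem_ball, dist_eq, sub_zero]; linarith) (by simpa using hg0)
    simp only [add_sub_cancel] at this
    refine this.trans ?_
    calc 2 * M * ‖z - c‖ / (3 / 2 - ‖z - c‖) ≤ 2 * M * (3 / 2) / (δ / 2) := by
          gcongr
          · linarith
          · linarith
      _ = _ := by field_simp; ring
  have hsc : ‖s - c‖ ≤ 3 / 2 - δ := by
    have : s - c = ((s.re - 2 : ℝ) : ℂ) := by
      apply Complex.ext <;> simp [hc, ht]
    rw [this, norm_real, Real.norm_eq_abs, abs_of_nonpos (by linarith)]
    linarith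
  have hin : Metric.closedBall s (δ / 2) ⊆ Metric.ball c (3 / 2) := by
    refine Metric.closedBall_subset_ball' ?_
    rw [dist_eq]; linarith
  have hd : DiffContOnCl ℂ g (Metric.ball s (δ / 2)) := by
    apply DifferentiableOn.diffContOnCl_ball (U := Metric.ball c (3 / 2))
    · exact fun z hz => (hg z hz).differentiableAt.differentiableWithinAt
    · exact hin
  have := norm_deriv_le_of_forall_mem_sphere_norm_le (C := 6 * M / δ) (half_pos hδ) hd ?_
  · rw [(hg s (hin (Metric.mem_closedBall_self (by linarith)))).deriv] at this
    refine this.trans (le_of_eq ?_)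
    field_simp; ring
  · intro z hz
    apply hbc
    rw [mem_sphere_iff_norm] at hz
    have : ‖z - c‖ ≤ ‖z - s‖ + ‖s - c‖ := by simpa using norm_add_le (z - s) (s - c)
    linarith

lemma L4b (h : RiemannHypothesis) {δ η : ℝ} (hδ : 0 < δ) (hη : 0 < η) :
    ∃ C : ℝ, 0 ≤ C ∧ ∀ s : ℂ, 1 / 2 + δ ≤ s.re → s.re ≤ 2 → ‖Pf s‖ ≤ C * (1 + |s.im|) ^ η := by
  obtain ⟨K, hK, hKs⟩ := L4a
  refine ⟨12 / δ ^ 2 * (Real.log (75 * K) + 2 / η), ?_, fun s h1 h2 => ?_⟩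
  · have : 0 ≤ Real.log (75 * K) := Real.log_nonneg (by linarith)
    positivity
  refine (L4b0 h hK hKs hδ h1 h2).trans ?_
  rw [mul_assoc (12 / δ ^ 2)]
  have ha := abs_nonneg s.im
  have hu : 1 ≤ (1 + |s.im|) ^ η := Real.one_le_rpow (by linarith) hη.le
  have hl : 0 ≤ Real.log (75 * K) := Real.log_nonneg (by linarith)
  have h3 := Real.log_le_rpow_div (x := 1 + |s.im|) (by linarith) hη
  gcongr
  rw [Real.log_mul (by positivity) (by positivity), Real.log_pow, add_mul]
  have : 2 / η * (1 + |s.im|) ^ η = 2 * ((1 + |s.im|) ^ η / η) := by ring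
  rw [this]
  push_cast
  nlinarith
end RHPi

namespace RHPi
open Complex Set Filter Topology MeasureTheory

noncomputable def D1 (x : ℝ) : ℂ := ∫ t in (1:ℝ)..x, Dp t

lemma Dp_int (a b : ℝ) : IntervalIntegrable Dp volume a b := by
  have h1 : IntervalIntegrable (fun t => Chebyshev.psi t - t) volume a b :=
    (Chebyshev.psi_mono.intervalIntegrable).sub intervalIntegral.intervalIntegrable_id
  exact ⟨h1.1.ofReal, h1.2.ofReal⟩

lemma D1_cont : Continuous D1 := intervalIntegral.continuous_primitive Dp_int 1

lemma D1_bound (x : ℝ) (hx : 1 < x) : ‖D1 x‖ ≤ (Real.log 4 + 5) * x ^ (2:ℝ) := by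
  have hl : 0 ≤ Real.log 4 := Real.log_nonneg (by norm_num)
  have := intervalIntegral.norm_integral_le_of_norm_le_const (a := 1) (b := x) (f := Dp)
    (C := (Real.log 4 + 5) * x) (fun t ht => by
      rw [uIoc_of_le hx.le] at ht
      refine (Dp_bound t ht.1).trans ?_
      rw [Real.rpow_one]
      gcongr; exact ht.2)
  refine this.trans ?_
  rw [abs_of_pos (by linarith), mul_assoc, Real.rpow_two]
  gcongr
  nlinarith

lemma psi_cont {t : ℝ} (ht : 0 < t) (hn : t ∉ range (fun n : ℕ => (n : ℝ))) :
    ContinuousAt Chebyshev.psi t := by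
  have h1 : (⌊t⌋₊ : ℝ) < t := lt_of_le_of_ne (Nat.floor_le ht.le) fun h => hn ⟨_, h⟩
  have h2 := Nat.lt_floor_add_one t
  refine (continuousAt_const (y := Chebyshev.psi t)).congr ?_
  filter_upwards [Ioo_mem_nhds h1 h2] with u hu
  have : ⌊u⌋₊ = ⌊t⌋₊ := by
    rw [Nat.floor_eq_iff (by have := hu.1; have : (0:ℝ) ≤ ⌊t⌋₊ := by positivity
                             linarith)]
    exact ⟨hu.1.le, hu.2⟩
  rw [Chebyshev.psi_eq_psi_coe_floor u, this, ← Chebyshev.psi_eq_psi_coe_floor]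

lemma D1_deriv {t : ℝ} (ht : 0 < t) (hn : t ∉ range (fun n : ℕ => (n : ℝ))) :
    HasDerivAt D1 (Dp t) t := by
  refine intervalIntegral.integral_hasDerivAt_right (Dp_int 1 t)
    (Dp_meas.stronglyMeasurable.stronglyMeasurableAtFilter) ?_
  exact continuous_ofReal.continuousAt.comp ((psi_cont ht hn).sub continuousAt_id)

lemma Mz_D1 {s : ℂ} (hs : 1 < s.re) : Mz Dp s = (s + 1) * Mz D1 (s + 1) := by
  have hs2 : 2 < (s + 1).re := by simp; linarith
  have i1 := Mz_integrable Dp_meas Dp_bound hs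
  have i2 := Mz_integrable D1_cont.measurable D1_bound hs2
  have h1 : ∀ T : ℝ, 1 ≤ T → (∫ t in (1:ℝ)..T, Dp t * (t : ℂ) ^ (-(s + 1))) -
      (s + 1) * (∫ t in (1:ℝ)..T, D1 t * (t : ℂ) ^ (-(s + 1 + 1))) = D1 T * (T : ℂ) ^ (-(s + 1)) := by
    intro T hT
    have j1 : IntervalIntegrable (fun t : ℝ => Dp t * (t : ℂ) ^ (-(s + 1))) volume 1 T :=
      (intervalIntegrable_iff_integrableOn_Ioc_of_le hT).mpr (i1.mono_set Ioc_subset_Ioi_self)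
    have j2 : IntervalIntegrable (fun t : ℝ => D1 t * (t : ℂ) ^ (-(s + 1 + 1))) volume 1 T :=
      (intervalIntegrable_iff_integrableOn_Ioc_of_le hT).mpr (i2.mono_set Ioc_subset_Ioi_self)
    have hd : ∀ t : ℝ, 0 < t → HasDerivAt (fun t : ℝ => (t : ℂ) ^ (-(s + 1)))
        (-(s + 1) * (t : ℂ) ^ (-(s + 1 + 1))) t := by
      intro t ht
      have := (hasDerivAt_id (t : ℂ)).cpow_const (c := -(s + 1)) (Or.inl (by simpa using ht))
      refine (this.comp_ofReal).congr_deriv ?_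
      simp only [id, mul_one]; congr 2; ring
    rw [← intervalIntegral.integral_const_mul, ← intervalIntegral.integral_sub j1 (j2.const_mul _)]
    have := integral_eq_of_hasDerivAt_off_countable_of_le
      (fun t : ℝ => D1 t * (t : ℂ) ^ (-(s + 1)))
      (fun t : ℝ => Dp t * (t : ℂ) ^ (-(s + 1)) - (s + 1) * (D1 t * (t : ℂ) ^ (-(s + 1 + 1)))) hT
      (countable_range (fun n : ℕ => (n : ℝ))) ?_ ?_ (j1.sub (j2.const_mul _))
    · rw [this]; simp [D1]
    · intro t ht
      exact (D1_cont.continuousAt.mul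
        (hd t (by linarith [ht.1])).continuousAt).continuousWithinAt
    · intro t ht
      have ht0 : 0 < t := by linarith [ht.1.1]
      refine ((D1_deriv ht0 ht.2).mul (hd t ht0)).congr_deriv ?_
      ring
  have t1 := intervalIntegral_tendsto_integral_Ioi 1 i1 tendsto_id
  have t2 := intervalIntegral_tendsto_integral_Ioi 1 i2 tendsto_id
  rw [← Mz_eq] at t1 t2
  have t3 := t1.sub (t2.const_mul (s + 1))
  have t4 : Tendsto (fun T : ℝ => D1 T * (T : ℂ) ^ (-(s + 1))) atTop (𝓝 0) := by
    have hz : Tendsto (fun T : ℝ => (Real.log 4 + 5) * T ^ (-(s.re - 1))) atTop (𝓝 0) := by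
      simpa using (tendsto_rpow_neg_atTop (show 0 < s.re - 1 by linarith)).const_mul
        (Real.log 4 + 5)
    refine squeeze_zero_norm' ?_ hz
    filter_upwards [eventually_gt_atTop 1] with T hT
    have hT0 : 0 < T := by linarith
    rw [norm_mul, norm_cpow_eq_rpow_re_of_pos hT0]
    calc ‖D1 T‖ * T ^ (-(s + 1)).re ≤ (Real.log 4 + 5) * T ^ (2:ℝ) * T ^ (-(s + 1)).re := by
          gcongr; exact D1_bound T hT
      _ = _ := by
        rw [mul_assoc, ← Real.rpow_add hT0]; congr 2; simp; ring
  have t5 := tendsto_nhds_unique (t3.congr' (by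
    filter_upwards [eventually_ge_atTop 1] with T hT using h1 T hT)) t4
  exact sub_eq_zero.mp t5

lemma D1_inc (n : ℕ) : D1 (n + 1) - D1 n = ((Chebyshev.psi n - n - 1 / 2 : ℝ) : ℂ) := by
  rw [D1, D1, intervalIntegral.integral_interval_sub_left (Dp_int _ _) (Dp_int _ _)]
  have : ∫ t in (n:ℝ)..(n + 1), Dp t = ∫ t in (n:ℝ)..(n + 1), ((Chebyshev.psi n - t : ℝ) : ℂ) := by
    refine intervalIntegral.integral_congr_ae ?_
    have : ∀ᵐ t : ℝ, t ≠ n + 1 := by simp [ae_iff, measure_singleton]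
    filter_upwards [this] with t ht hm
    rw [uIoc_of_le (by linarith)] at hm
    have h2 : t < n + 1 := lt_of_le_of_ne hm.2 ht
    have : ⌊t⌋₊ = n := by
      rw [Nat.floor_eq_iff (by have := hm.1; have : (0:ℝ) ≤ n := by positivity
                               linarith)]
      exact ⟨hm.1.le, h2⟩
    rw [Dp, Chebyshev.psi_eq_psi_coe_floor t, this]
  rw [this, intervalIntegral.integral_ofReal]
  congr 1
  rw [intervalIntegral.integral_sub (by simp) (by simp)]
  simp
  ring

end RHPi

namespace RHPi
open Complex Set Filter Topology MeasureTheory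

lemma dec_int : Integrable (fun y : ℝ => (1 + |y|) ^ (-(3 / 2 : ℝ))) := by
  have := integrable_one_add_norm (E := ℝ) (μ := volume) (r := 3 / 2) (by simp; norm_num)
  simpa using this

lemma line_int {G : ℂ → ℂ} {a C : ℝ} (hd : ∀ s : ℂ, s.re = a → ContinuousAt G s)
    (hb : ∀ s : ℂ, s.re = a → ‖G s‖ ≤ C * (1 + |s.im|) ^ (-(3 / 2 : ℝ))) :
    Integrable (fun y : ℝ => G (a + y * I)) := by
  refine (dec_int.const_mul C).mono' ?_ (ae_of_all _ fun y => ?_)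
  · refine Continuous.aestronglyMeasurable ?_
    rw [continuous_iff_continuousAt]
    intro y
    exact ContinuousAt.comp (f := fun y : ℝ => (a + y * I : ℂ)) (hd _ (by simp)) (by fun_prop)
  · simpa using hb (a + y * I) (by simp)

lemma shift {G : ℂ → ℂ} {a b C : ℝ} (hab : a ≤ b)
    (hd : ∀ s : ℂ, a ≤ s.re → s.re ≤ b → DifferentiableAt ℂ G s)
    (hb : ∀ s : ℂ, a ≤ s.re → s.re ≤ b → ‖G s‖ ≤ C * (1 + |s.im|) ^ (-(3 / 2 : ℝ))) :
    ∫ y : ℝ, G (a + y * I) = ∫ y : ℝ, G (b + y * I) := by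
  have ia : Integrable (fun y : ℝ => G (a + y * I)) :=
    line_int (fun s hs => (hd s hs.ge (by linarith)).continuousAt)
      (fun s hs => hb s hs.ge (by linarith))
  have ib : Integrable (fun y : ℝ => G (b + y * I)) :=
    line_int (fun s hs => (hd s (by linarith) hs.le).continuousAt)
      (fun s hs => hb s (by linarith) hs.le)
  have ta := intervalIntegral_tendsto_integral ia tendsto_neg_atTop_atBot tendsto_id
  have tb := intervalIntegral_tendsto_integral ib tendsto_neg_atTop_atBot tendsto_id
  have hz : Tendsto (fun T : ℝ => (b - a) * (C * (1 + T) ^ (-(3 / 2 : ℝ)))) atTop (𝓝 0) := by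
    have h1 : Tendsto (fun T : ℝ => 1 + T) atTop atTop := tendsto_atTop_add_const_left _ _ tendsto_id
    have := (tendsto_rpow_neg_atTop (show (0:ℝ) < 3 / 2 by norm_num)).comp h1
    simpa using (this.const_mul C).const_mul (b - a)
  have hh : ∀ (e : ℝ → ℝ), (∀ T, 0 ≤ T → |e T| = T) →
      Tendsto (fun T : ℝ => ∫ x in a..b, G (x + e T * I)) atTop (𝓝 0) := by
    intro e he
    refine squeeze_zero_norm' ?_ hz
    filter_upwards [eventually_ge_atTop 0] with T hT
    refine (intervalIntegral.norm_integral_le_of_norm_le_const (C := C * (1 + T) ^ (-(3 / 2 : ℝ)))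
      fun x hx => ?_).trans ?_
    · rw [uIoc_of_le hab] at hx
      simpa [he T hT] using hb (x + e T * I) (by simpa using hx.1.le) (by simpa using hx.2)
    · rw [abs_of_nonneg (by linarith), mul_comm]
  have h1 := hh (fun T => -T) (fun T hT => by simp [abs_of_nonneg hT])
  have h2 := hh (fun T => T) (fun T hT => abs_of_nonneg hT)
  have key : ∀ T : ℝ, (∫ x in a..b, G (x + (-T : ℝ) * I)) - (∫ x in a..b, G (x + T * I)) +
      I • (∫ y in (-T)..T, G (b + y * I)) - I • (∫ y in (-T)..T, G (a + y * I)) = 0 := by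
    intro T
    have := integral_boundary_rect_eq_zero_of_differentiableOn G ⟨a, -T⟩ ⟨b, T⟩ ?_
    · simpa using this
    · intro s hs
      have := hs.1
      simp only [mem_preimage, uIcc_of_le hab] at this
      exact (hd s this.1 this.2).differentiableWithinAt
  have tt := ((h1.sub h2).add (tb.const_smul I)).sub (ta.const_smul I)
  have := tendsto_nhds_unique (tt.congr fun T => key T) tendsto_const_nhds
  simp only [sub_zero, zero_add, smul_eq_mul] at this
  have h3 := sub_eq_zero.mp this
  exact (mul_left_cancel₀ I_ne_zero h3).symm

noncomputable def Hf (s : ℂ) : ℂ := -(Pf s + 1) / (s * (s + 1))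

lemma s_lower {s : ℂ} (hs : 1 / 2 ≤ s.re) : 1 + |s.im| ≤ 3 * ‖s‖ := by
  have h1 := re_le_norm s
  have h2 := abs_im_le_norm s
  linarith

lemma s1_lower {s : ℂ} (hs : 1 / 2 ≤ s.re) : 1 + |s.im| ≤ 3 * ‖s + 1‖ := by
  have := s_lower (s := s + 1) (by simp; linarith)
  simpa using this

lemma Q_bound (h : RiemannHypothesis) {δ η : ℝ} (hδ : 0 < δ) (hη : 0 < η) :
    ∃ C : ℝ, 0 ≤ C ∧ ∀ s : ℂ, 1 / 2 + δ ≤ s.re → s.re ≤ 2 →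
      ‖(Pf s + 1) / s‖ ≤ C * (1 + |s.im|) ^ (η - 1) := by
  obtain ⟨C, hC, hb⟩ := L4b h hδ hη
  refine ⟨3 * (C + 1), by positivity, fun s h1 h2 => ?_⟩
  have hl := s_lower (s := s) (by linarith)
  have hp : 0 < 1 + |s.im| := by positivity
  have hs : 0 < ‖s‖ := by linarith
  rw [norm_div, div_le_iff₀ hs, Real.rpow_sub_one hp.ne']
  have h3 : 1 ≤ (1 + |s.im|) ^ η := Real.one_le_rpow (by linarith [abs_nonneg s.im]) hη.le
  have h4 : ‖Pf s + 1‖ ≤ (C + 1) * (1 + |s.im|) ^ η := by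
    have := norm_add_le (Pf s) 1
    rw [norm_one] at this
    linarith [hb s h1 h2]
  calc ‖Pf s + 1‖ ≤ (C + 1) * (1 + |s.im|) ^ η := h4
    _ = (C + 1) * (1 + |s.im|) ^ η * ((1 + |s.im|) / (1 + |s.im|)) := by
        rw [div_self hp.ne', mul_one]
    _ ≤ (C + 1) * (1 + |s.im|) ^ η * ((3 * ‖s‖) / (1 + |s.im|)) := by gcongr
    _ = _ := by ring

lemma Hf_bound (h : RiemannHypothesis) {δ : ℝ} (hδ : 0 < δ) :
    ∃ C : ℝ, 0 ≤ C ∧ ∀ s : ℂ, 1 / 2 + δ ≤ s.re → s.re ≤ 2 →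
      ‖Hf s‖ ≤ C * (1 + |s.im|) ^ (-(3 / 2 : ℝ)) := by
  obtain ⟨C, hC, hb⟩ := Q_bound h hδ (η := 1 / 2) (by norm_num)
  refine ⟨3 * C, by positivity, fun s h1 h2 => ?_⟩
  have hl := s1_lower (s := s) (by linarith)
  have hp : 0 < 1 + |s.im| := by positivity
  have hs : 0 < ‖s + 1‖ := by linarith
  have e : Hf s = -((Pf s + 1) / s) / (s + 1) := by rw [Hf, neg_div, ← div_div, neg_div]
  have e2 : (1 + |s.im|) ^ (-(3 / 2 : ℝ)) = (1 + |s.im|) ^ ((1:ℝ) / 2 - 1) / (1 + |s.im|) := by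
    rw [← Real.rpow_sub_one hp.ne']; norm_num
  rw [e, norm_div, norm_neg, div_le_iff₀ hs, e2]
  calc _ ≤ C * (1 + |s.im|) ^ ((1:ℝ) / 2 - 1) := hb s h1 h2
    _ = C * (1 + |s.im|) ^ ((1:ℝ) / 2 - 1) * ((1 + |s.im|) / (1 + |s.im|)) := by
        rw [div_self hp.ne', mul_one]
    _ ≤ C * (1 + |s.im|) ^ ((1:ℝ) / 2 - 1) * ((3 * ‖s + 1‖) / (1 + |s.im|)) := by gcongr
    _ = _ := by ring

lemma Hf_diff (h : RiemannHypothesis) {s : ℂ} (hs : 1 / 2 < s.re) : DifferentiableAt ℂ Hf s := by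
  have h1 := Pf_diff h hs
  have h2 : s * (s + 1) ≠ 0 := by
    have a1 := s_lower hs.le
    have a2 := s1_lower hs.le
    have := abs_nonneg s.im
    refine mul_ne_zero (norm_pos_iff.mp (by linarith)) (norm_pos_iff.mp (by linarith))
  unfold Hf
  exact (h1.add_const 1).neg.div (by fun_prop) h2

lemma Hf_eq (h : RiemannHypothesis) {s : ℂ} (hs : 1 < s.re) : Mz D1 (s + 1) = Hf s := by
  have a1 := s_lower (s := s) (by linarith)
  have a2 := s1_lower (s := s) (by linarith)
  have := abs_nonneg s.im
  have n1 : s ≠ 0 := norm_pos_iff.mp (by linarith)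
  have n2 : s + 1 ≠ 0 := norm_pos_iff.mp (by linarith)
  have hZ := Zf_ne_zero_of_RH h (s := s) (by linarith)
  have e1 : Pf s = -(s * Mz Dp s + 1) := by
    rw [Pf, Zf_ode hs, mul_div_assoc, div_self hZ, mul_one]
  rw [Hf, e1, Mz_D1 hs]
  field_simp
  ring

end RHPi

namespace RHPi
open Complex Set Filter Topology MeasureTheory

lemma xH_bound {x : ℝ} (hx : 1 < x) {δ C : ℝ} (hC : 0 ≤ C)
    (hb : ∀ s : ℂ, 1 / 2 + δ ≤ s.re → s.re ≤ 2 →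
      ‖Hf s‖ ≤ C * (1 + |s.im|) ^ (-(3 / 2 : ℝ))) (s : ℂ) (h1 : 1 / 2 + δ ≤ s.re)
    (h2 : s.re ≤ 2) :
    ‖(x : ℂ) ^ (s + 1) * Hf s‖ ≤ (x ^ (3:ℝ) * C) * (1 + |s.im|) ^ (-(3 / 2 : ℝ)) := by
  rw [norm_mul, norm_cpow_eq_rpow_re_of_pos (by linarith), mul_assoc]
  gcongr
  · exact hx.le
  · simp; linarith
  · exact hb s h1 h2

lemma xH_diff (h : RiemannHypothesis) {x : ℝ} (hx : 1 < x) {s : ℂ} (hs : 1 / 2 < s.re) :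
    DifferentiableAt ℂ (fun s : ℂ => (x : ℂ) ^ (s + 1) * Hf s) s := by
  have hx0 : (x : ℂ) ≠ 0 := by exact_mod_cast (by linarith : x ≠ 0)
  refine DifferentiableAt.mul ?_ (Hf_diff h hs)
  exact DifferentiableAt.const_cpow (by fun_prop) (Or.inl hx0)

lemma xH_int (h : RiemannHypothesis) {x : ℝ} (hx : 1 < x) {δ : ℝ} (hδ : 0 < δ)
    (hδ2 : 1 / 2 + δ ≤ 2) : Integrable (fun y : ℝ =>
      (x : ℂ) ^ (((1 / 2 + δ : ℝ) : ℂ) + y * I + 1) * Hf (((1 / 2 + δ : ℝ) : ℂ) + y * I)) := by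
  obtain ⟨C, hC, hb⟩ := Hf_bound h hδ
  exact line_int (G := fun s : ℂ => (x : ℂ) ^ (s + 1) * Hf s)
    (fun s hs => (xH_diff h hx (by linarith)).continuousAt)
    (fun s hs => xH_bound hx hC hb s hs.ge (by linarith))

lemma D1_two (h : RiemannHypothesis) {x : ℝ} (hx : 1 < x) :
    D1 x = (1 / (2 * Real.pi)) • ∫ y : ℝ, (x : ℂ) ^ (((2 : ℝ) : ℂ) + y * I + 1) *
      Hf (((2 : ℝ) : ℂ) + y * I) := by
  have hm : ∀ y : ℝ, mellin ((Ioi 1).indicator D1) (((-3 : ℝ) : ℂ) + (-y : ℝ) * I) =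
      Hf (((2 : ℝ) : ℂ) + y * I) := by
    intro y
    rw [← Hf_eq h (by simp), Mz]
    congr 1; push_cast; ring
  have hv0 : Integrable (fun y : ℝ => Hf (((2 : ℝ) : ℂ) + y * I)) := by
    obtain ⟨C, hC, hb⟩ := Hf_bound h one_pos
    exact line_int (fun s hs => (Hf_diff h (by rw [hs]; norm_num)).continuousAt)
      (fun s hs => hb s (by rw [hs]; norm_num) hs.le)
  have hv : VerticalIntegrable (mellin ((Ioi 1).indicator D1)) (-3) := by
    unfold VerticalIntegrable
    refine (hv0.comp_neg).congr (ae_of_all _ fun y => ?_)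
    have := hm (-y)
    rw [neg_neg] at this
    exact this.symm
  have hc : MellinConvergent ((Ioi 1).indicator D1) ((-3 : ℝ) : ℂ) := by
    have := Mz_conv D1_cont.measurable D1_bound (s := 3) (by simp; norm_num)
    simpa using this
  have hca : ContinuousAt ((Ioi 1).indicator D1) x := by
    refine D1_cont.continuousAt.congr ?_
    filter_upwards [Ioi_mem_nhds hx] with t ht
    rw [indicator_of_mem ht]
  have := mellinInv_mellin_eq (-3) _ (by linarith) hc hv hca
  rw [indicator_of_mem (mem_Ioi.mpr hx)] at this
  rw [← this, mellinInv, ← integral_neg_eq_self]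
  congr 2
  ext y
  rw [hm y, smul_eq_mul]
  congr 2; push_cast; ring

lemma D1_eq (h : RiemannHypothesis) {x : ℝ} (hx : 1 < x) {δ : ℝ} (hδ : 0 < δ)
    (hδ2 : 1 / 2 + δ ≤ 2) :
    D1 x = (1 / (2 * Real.pi)) • ∫ y : ℝ, (x : ℂ) ^ (((1 / 2 + δ : ℝ) : ℂ) + y * I + 1) *
      Hf (((1 / 2 + δ : ℝ) : ℂ) + y * I) := by
  obtain ⟨C, hC, hb⟩ := Hf_bound h hδ
  rw [D1_two h hx, shift (G := fun s : ℂ => (x : ℂ) ^ (s + 1) * Hf s) hδ2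
    (fun s h1 h2 => xH_diff h hx (by linarith)) (xH_bound hx hC hb)]

lemma cpow_inc {y : ℝ} (hy : 0 < y) {s : ℂ} (hs : 0 ≤ s.re) :
    ‖((y + 1 : ℝ) : ℂ) ^ (s + 1) - (y : ℂ) ^ (s + 1)‖ ≤ ‖s + 1‖ * (y + 1) ^ s.re := by
  have := (convex_Icc y (y + 1)).norm_image_sub_le_of_norm_hasDerivWithin_le
    (f := fun t : ℝ => (t : ℂ) ^ (s + 1)) (f' := fun t : ℝ => (s + 1) * (t : ℂ) ^ s)
    (C := ‖s + 1‖ * (y + 1) ^ s.re) (x := y) (y := y + 1) (fun t ht => ?_) (fun t ht => ?_)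
    ⟨le_rfl, by linarith⟩ ⟨by linarith, le_rfl⟩
  · simpa using this
  · have ht0 : 0 < t := by linarith [ht.1]
    have := (hasDerivAt_id (t : ℂ)).cpow_const (c := s + 1) (Or.inl (by simpa using ht0))
    refine (this.comp_ofReal.congr_deriv ?_).hasDerivWithinAt
    simp
  · have ht0 : 0 < t := by linarith [ht.1]
    rw [norm_mul, norm_cpow_eq_rpow_re_of_pos ht0]
    gcongr
    exact ht.2

lemma cpow_inc2 {y : ℝ} (hy : 0 < y) {s : ℂ} (hs : 0 ≤ s.re) :
    ‖((y + 1 : ℝ) : ℂ) ^ (s + 1) - (y : ℂ) ^ (s + 1)‖ ≤ 2 * (y + 1) * (y + 1) ^ s.re := by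
  refine (norm_sub_le _ _).trans ?_
  rw [norm_cpow_eq_rpow_re_of_pos hy, norm_cpow_eq_rpow_re_of_pos (by linarith)]
  have h1 : y ^ (s + 1).re ≤ (y + 1) ^ (s + 1).re := by
    gcongr
    · simp; linarith
    · linarith
  have h2 : (y + 1) ^ (s + 1).re = (y + 1) * (y + 1) ^ s.re := by
    rw [add_re, one_re, Real.rpow_add_one (by linarith), mul_comm]
  linarith

lemma W_bound {y : ℝ} (hy : 1 ≤ y) {s : ℂ} (hs : 1 / 2 ≤ s.re) {θ : ℝ} (h0 : 0 ≤ θ)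
    (h1 : θ ≤ 1) :
    ‖(((y + 1 : ℝ) : ℂ) ^ (s + 1) - (y : ℂ) ^ (s + 1)) / (s + 1)‖ ≤
      (12 * y) ^ (s.re + θ) * (1 + |s.im|) ^ (-θ) := by
  have hl := s1_lower hs
  have hp : 0 < 1 + |s.im| := by positivity
  have hn : 0 < ‖s + 1‖ := by linarith
  have b1 := cpow_inc (by linarith : 0 < y) (by linarith : 0 ≤ s.re)
  have b2 := cpow_inc2 (by linarith : 0 < y) (by linarith : 0 ≤ s.re)
  set X := 12 * y / (1 + |s.im|) with hX
  have hX0 : 0 < X := by positivity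
  have hA : 0 ≤ (y + 1) ^ s.re := by positivity
  have c1 : ‖(((y + 1 : ℝ) : ℂ) ^ (s + 1) - (y : ℂ) ^ (s + 1)) / (s + 1)‖ ≤
      (y + 1) ^ s.re * X ^ θ := by
    rw [norm_div, div_le_iff₀ hn]
    rcases le_total 1 X with h | h
    · have : 1 ≤ X ^ θ := Real.one_le_rpow h h0
      calc _ ≤ ‖s + 1‖ * (y + 1) ^ s.re := b1
        _ = (y + 1) ^ s.re * 1 * ‖s + 1‖ := by ring
        _ ≤ _ := by gcongr
    · have h3 : X ≤ X ^ θ := by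
        simpa using Real.rpow_le_rpow_of_exponent_ge hX0 h h1
      have h4 : 2 * (y + 1) ≤ X * ‖s + 1‖ := by
        rw [hX, div_mul_eq_mul_div, le_div_iff₀ hp]
        nlinarith
      calc _ ≤ 2 * (y + 1) * (y + 1) ^ s.re := b2
        _ ≤ X * ‖s + 1‖ * (y + 1) ^ s.re := by gcongr
        _ = (y + 1) ^ s.re * X * ‖s + 1‖ := by ring
        _ ≤ _ := by gcongr
  refine c1.trans ?_
  rw [hX, Real.div_rpow (by linarith) hp.le, Real.rpow_add (by linarith), Real.rpow_neg hp.le,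
    mul_assoc, div_eq_mul_inv]
  gcongr
  linarith

lemma psi_nat (h : RiemannHypothesis) {e : ℝ} (he : 0 < e) (he1 : e ≤ 1) :
    ∃ C : ℝ, 0 ≤ C ∧ ∀ n : ℕ, 2 ≤ n →
      |Chebyshev.psi n - n - 1 / 2| ≤ C * (n : ℝ) ^ (1 / 2 + e) := by
  obtain ⟨C, hC, hb⟩ := Q_bound h (half_pos he) (η := e / 4) (by linarith)
  have hJ : Integrable (fun y : ℝ => (1 + |y|) ^ (-(1 + e / 4))) := by
    have := integrable_one_add_norm (E := ℝ) (μ := volume) (r := 1 + e / 4) (by simp; linarith)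
    simpa using this
  set J := ∫ y : ℝ, (1 + |y|) ^ (-(1 + e / 4)) with hJd
  have hJ0 : 0 ≤ J := integral_nonneg fun y => by positivity
  refine ⟨1 / (2 * Real.pi) * (12 ^ (1 / 2 + e) * C * J), by have := Real.pi_pos; positivity,
    fun n hn => ?_⟩
  have hn2 : (2:ℝ) ≤ n := by exact_mod_cast hn
  have key : ((Chebyshev.psi n - n - 1 / 2 : ℝ) : ℂ) = (1 / (2 * Real.pi)) • ∫ y : ℝ,
      ((((n + 1 : ℝ) : ℂ) ^ (((1 / 2 + e / 2 : ℝ) : ℂ) + y * I + 1) *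
        Hf (((1 / 2 + e / 2 : ℝ) : ℂ) + y * I)) -
      (((n : ℝ) : ℂ) ^ (((1 / 2 + e / 2 : ℝ) : ℂ) + y * I + 1) *
        Hf (((1 / 2 + e / 2 : ℝ) : ℂ) + y * I))) := by
    rw [integral_sub (xH_int h (by linarith) (by linarith) (by linarith))
      (xH_int h (by linarith) (by linarith) (by linarith)), smul_sub,
      ← D1_eq h (by linarith) (by linarith) (by linarith),
      ← D1_eq h (by linarith) (by linarith) (by linarith), D1_inc]
  have hbd : ∀ y : ℝ, ‖((((n + 1 : ℝ) : ℂ) ^ (((1 / 2 + e / 2 : ℝ) : ℂ) + y * I + 1) *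
        Hf (((1 / 2 + e / 2 : ℝ) : ℂ) + y * I)) -
      (((n : ℝ) : ℂ) ^ (((1 / 2 + e / 2 : ℝ) : ℂ) + y * I + 1) *
        Hf (((1 / 2 + e / 2 : ℝ) : ℂ) + y * I)))‖ ≤
      ((12 * n) ^ (1 / 2 + e) * C) * (1 + |y|) ^ (-(1 + e / 4)) := by
    intro y
    set s : ℂ := ((1 / 2 + e / 2 : ℝ) : ℂ) + y * I with hs
    have hre : s.re = 1 / 2 + e / 2 := by simp [hs]
    have him : s.im = y := by simp [hs]
    have w := W_bound (y := (n : ℝ)) (s := s) (by linarith) (by linarith) (θ := e / 2)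
      (by linarith) (by linarith)
    have q := hb s hre.ge (by linarith)
    have e1 : ((n + 1 : ℝ) : ℂ) ^ (s + 1) * Hf s - ((n : ℝ) : ℂ) ^ (s + 1) * Hf s =
        -((((n + 1 : ℝ) : ℂ) ^ (s + 1) - ((n : ℝ) : ℂ) ^ (s + 1)) / (s + 1)) *
          ((Pf s + 1) / s) := by
      rw [Hf, mul_comm s (s + 1), neg_mul, div_mul_div_comm, neg_div]; ring
    rw [e1, norm_mul, norm_neg]
    rw [him] at w q
    rw [hre] at w
    have hp : 0 < 1 + |y| := by positivity
    calc _ ≤ ((12 * (n:ℝ)) ^ (1 / 2 + e / 2 + e / 2) * (1 + |y|) ^ (-(e / 2))) *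
          (C * (1 + |y|) ^ (e / 4 - 1)) := by gcongr
      _ = ((12 * (n:ℝ)) ^ (1 / 2 + e / 2 + e / 2) * C) *
          ((1 + |y|) ^ (-(e / 2)) * (1 + |y|) ^ (e / 4 - 1)) := by ring
      _ = _ := by
          rw [← Real.rpow_add hp]
          congr 3 <;> ring
  have hfin := norm_integral_le_of_norm_le (hJ.const_mul ((12 * n) ^ (1 / 2 + e) * C))
    (ae_of_all _ hbd)
  rw [integral_const_mul, ← hJd] at hfin
  have e2 : |Chebyshev.psi n - n - 1 / 2| = ‖((Chebyshev.psi n - n - 1 / 2 : ℝ) : ℂ)‖ := by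
    rw [norm_real, Real.norm_eq_abs]
  have hpi : 0 < 1 / (2 * Real.pi) := by have := Real.pi_pos; positivity
  rw [e2, key, norm_smul, Real.norm_of_nonneg hpi.le, mul_assoc]
  gcongr
  refine hfin.trans (le_of_eq ?_)
  rw [Real.mul_rpow (by norm_num) (by positivity)]
  ring

lemma PB_of_RH (h : RiemannHypothesis) : PB (fun x => Chebyshev.psi x - x) := by
  intro ε hε
  obtain ⟨C, hC, hb⟩ := psi_nat h (e := min ε 1) (lt_min hε one_pos) (min_le_right _ _)
  refine ⟨C + 2, fun x hx => ?_⟩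
  have hf : (⌊x⌋₊ : ℝ) ≤ x := Nat.floor_le (by linarith)
  have hf2 := Nat.lt_floor_add_one x
  have hn : 2 ≤ ⌊x⌋₊ := Nat.le_floor (by exact_mod_cast hx)
  have h1 := hb _ hn
  have h2 : (⌊x⌋₊ : ℝ) ^ (1 / 2 + min ε 1) ≤ x ^ (1 / 2 + ε) := by
    have : 0 < min ε 1 := lt_min hε one_pos
    calc (⌊x⌋₊ : ℝ) ^ (1 / 2 + min ε 1) ≤ x ^ (1 / 2 + min ε 1) := by gcongr
      _ ≤ _ := by
        gcongr
        · linarith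
        · exact min_le_left _ _
  have h3 : 1 ≤ x ^ (1 / 2 + ε) := Real.one_le_rpow (by linarith) (by linarith)
  have h4 : C * (⌊x⌋₊ : ℝ) ^ (1 / 2 + min ε 1) ≤ C * x ^ (1 / 2 + ε) := by gcongr
  beta_reduce
  rw [Chebyshev.psi_eq_psi_coe_floor x]
  have h5 := abs_le.mp (h1.trans h4)
  rw [abs_le]
  constructor <;> linarith [h5.1, h5.2]

end RHPi

/-- The Riemann hypothesis holds if and only if for every `ε > 0` there is a constant `C`
with `|π(x) − Li(x)| ≤ C·x^{1/2+ε}` for all real `x ≥ 2`. -/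
theorem riemannHypothesis_iff_pi_sub_Li_le :
    RiemannHypothesis ↔
      ∀ ε : ℝ, 0 < ε → ∃ C : ℝ, ∀ x : ℝ, 2 ≤ x →
        |primePi x - Li x| ≤ C * x ^ ((1 : ℝ) / 2 + ε) := by
  exact ⟨fun h => RHPi.pi_iff_psi.mpr (RHPi.PB_of_RH h),
    fun h => RHPi.RH_of_PB (RHPi.pi_iff_psi.mp h)⟩
end

section
/- The limit relation θ(x)/x → 1 as x → ∞ holds if and only if π(x)·log x / x → 1 as x → ∞ (Chebyshev's equivalence between the theta function and the prime counting function asymptotics). -/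
/-- The Chebyshev theta function `θ(x) = ∑_{p ≤ x, p prime} log p`. -/
noncomputable def theta (x : ℝ) : ℝ :=
  ∑ p ∈ (Finset.range (⌊x⌋₊ + 1)).filter Nat.Prime, Real.log p

theorem theta_eq_chebyshev (x : ℝ) : theta x = Chebyshev.theta x := by
  rw [Chebyshev.theta_eq_sum_Icc, theta, Nat.range_succ_eq_Icc_zero]

theorem primePi_eq_primeCounting (x : ℝ) : primePi x = (Nat.primeCounting ⌊x⌋₊ : ℝ) := by
  rw [primePi, Nat.primeCounting, Nat.primeCounting', Nat.count_eq_card_filter_range]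

/-- The difference of the two quotients tends to zero. -/
theorem primePi_sub_theta_tendsto_zero :
    Filter.Tendsto (fun x : ℝ => primePi x * Real.log x / x - theta x / x)
      Filter.atTop (nhds 0) := by
  refine Chebyshev.integral_theta_div_log_sq_isLittleO.tendsto_div_nhds_zero.congr' ?_
  filter_upwards [Filter.eventually_ge_atTop 2] with x hx
  have hl : Real.log x ≠ 0 := (Real.log_pos (by linarith)).ne'
  have hx0 : x ≠ 0 := by linarith
  rw [theta_eq_chebyshev, primePi_eq_primeCounting,
    Chebyshev.primeCounting_eq_theta_div_log_add_integral hx]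
  field_simp
  ring

/-- Chebyshev's equivalence: `θ(x)/x → 1` as `x → ∞` if and only if
`π(x)·log x / x → 1` as `x → ∞`. -/
theorem theta_div_tendsto_iff_primePi_mul_log_div_tendsto :
    Filter.Tendsto (fun x : ℝ => theta x / x) Filter.atTop (nhds 1) ↔
      Filter.Tendsto (fun x : ℝ => primePi x * Real.log x / x) Filter.atTop (nhds 1) := by
  constructor
  · intro h
    simpa using h.add primePi_sub_theta_tendsto_zero
  · intro h
    simpa using h.sub primePi_sub_theta_tendsto_zero
end
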